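/- arXiv:1604.00577 — 12 statements merged into one kernel-verified Lean document; each statement's English description precedes it below -/
import Mathlib

section
/- Let β1 ≥ 2 be an integer and β2 = 2(β1 − 1). Let d1 < d2 < d3 < d4 < d5 be positive integers with σ1 = d1 + d2 + d3 + d4 + d5, let g be a positive integer, and let x_1,…,x_{β1}, y_1,…,y_{β2}, z_1,…,z_{β1} be positive integers with z_i = g − x_i for every i. Suppose there exist matrices b ∈ {0,1}^{β2×β1}, l ∈ {0,1}^{β1×β2} and nonnegative integer matrices c ∈ ℕ^{β2×4}, e ∈ ℕ^{β1×4} such that y_i = Σ_{j=1}^{β1} b_{ij}·x_j + Σ_{j=2}^{5} c_{ij}·d_j for all 1 ≤ i ≤ β2, and z_i = Σ_{j=1}^{β2} l_{ij}·y_j + Σ_{j=2}^{5} e_{ij}·d_j for all 1 ≤ i ≤ β1, and such that: for every j with 1 ≤ j ≤ β1 there is at least one i with b_{ij} = 1; for every j with 1 ≤ j ≤ β2 there is at least one i with l_{ij} = 1; for every j with 2 ≤ j ≤ 5 there is at least one i with c_{ij} ≥ 1; and for every j with 2 ≤ j ≤ 5 there is at least one i with e_{ij} ≥ 1. Then, writing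 X1 = Σ_{i=1}^{β1} x_i and Z1 = Σ_{i=1}^{β1} z_i, one has 2·X1 ≤ β1·g − 2(σ1 − d1) and 2·Z1 ≥ β1·g + 2(σ1 − d1). -/
theorem col_aux {p q : ℕ} (m : Fin p → Fin q → ℕ) (w : Fin q → ℕ)
    (h : ∀ j, ∃ i, 1 ≤ m i j) : ∑ j, w j ≤ ∑ i, ∑ j, m i j * w j := by
  rw [Finset.sum_comm]
  apply Finset.sum_le_sum
  intro j _
  obtain ⟨i, hi⟩ := h j
  calc w j ≤ m i j * w j := Nat.le_mul_of_pos_left _ hi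
    _ ≤ ∑ i, m i j * w j :=
      Finset.single_le_sum (f := fun i => m i j * w j) (fun _ _ => Nat.zero_le _)
        (Finset.mem_univ i)

theorem step_aux {p q : ℕ} (m : Fin p → Fin q → ℕ) (w : Fin q → ℕ) (v : Fin p → ℕ)
    (c : Fin p → Fin 4 → ℕ) (d2 d3 d4 d5 : ℕ)
    (hv : ∀ i, v i = (∑ j, m i j * w j) +
      (c i 0 * d2 + c i 1 * d3 + c i 2 * d4 + c i 3 * d5))
    (hm : ∀ j, ∃ i, m i j = 1) (hc : ∀ j : Fin 4, ∃ i, 1 ≤ c i j) :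
    ∑ j, w j + (d2 + d3 + d4 + d5) ≤ ∑ i, v i := by
  have h1 := col_aux m w (fun j => (hm j).imp fun _ h => h.ge)
  have h2 := col_aux c ![d2, d3, d4, d5] hc
  simp only [Fin.sum_univ_four] at h2
  have h3 : ∑ i, v i = (∑ i, ∑ j, m i j * w j) +
      ∑ i, (c i 0 * d2 + c i 1 * d3 + c i 2 * d4 + c i 3 * d5) := by
    rw [← Finset.sum_add_distrib]
    exact Finset.sum_congr rfl fun i _ => hv i
  rw [h3]
  exact Nat.add_le_add h1 h2

/-- Lemma 1 (combinatorial content): bounds on the sums of first- and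
third-syzygy degrees of a symmetric (not CI) numerical semigroup generated
by five elements. -/
theorem stmt_0
    (β1 : ℕ) (hβ1 : 2 ≤ β1)
    (β2 : ℕ) (hβ2 : β2 = 2 * (β1 - 1))
    (d1 d2 d3 d4 d5 : ℕ) (hd1 : 0 < d1)
    (h12 : d1 < d2) (h23 : d2 < d3) (h34 : d3 < d4) (h45 : d4 < d5)
    (σ1 : ℕ) (hσ1 : σ1 = d1 + d2 + d3 + d4 + d5)
    (g : ℕ) (hg : 0 < g)
    (x z : Fin β1 → ℕ) (y : Fin β2 → ℕ)
    (hx : ∀ i, 0 < x i) (hy : ∀ i, 0 < y i) (hz : ∀ i, 0 < z i)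
    (hzx : ∀ i, z i + x i = g)
    (b : Fin β2 → Fin β1 → ℕ) (l : Fin β1 → Fin β2 → ℕ)
    (c : Fin β2 → Fin 4 → ℕ) (e : Fin β1 → Fin 4 → ℕ)
    (hb01 : ∀ i j, b i j ≤ 1) (hl01 : ∀ i j, l i j ≤ 1)
    (hy_eq : ∀ i, y i = (∑ j, b i j * x j) +
      (c i 0 * d2 + c i 1 * d3 + c i 2 * d4 + c i 3 * d5))
    (hz_eq : ∀ i, z i = (∑ j, l i j * y j) +
      (e i 0 * d2 + e i 1 * d3 + e i 2 * d4 + e i 3 * d5))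
    (hbcol : ∀ j, ∃ i, b i j = 1)
    (hlcol : ∀ j, ∃ i, l i j = 1)
    (hccol : ∀ j : Fin 4, ∃ i, 1 ≤ c i j)
    (hecol : ∀ j : Fin 4, ∃ i, 1 ≤ e i j) :
    2 * (∑ i, x i) + 2 * (σ1 - d1) ≤ β1 * g ∧
    β1 * g + 2 * (σ1 - d1) ≤ 2 * (∑ i, z i) := by
  have h1 := step_aux b x y c d2 d3 d4 d5 hy_eq hbcol hccol
  have h2 := step_aux l y z e d2 d3 d4 d5 hz_eq hlcol hecol
  have h3 : ∑ i, z i + ∑ i, x i = β1 * g := by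
    rw [← Finset.sum_add_distrib, Finset.sum_congr rfl fun i _ => hzx i]
    simp
  omega
end

section
/- Let β1 > 4 be an integer and set χ = β1 − 1, u1⁻ = (β1 − √β1)/2, A = 2/(β1(β1−1)), B = 1/β1, C = (β1−2)(β1−3)/2, D = β1² − 5β1 + 7, E* = D − 2B·u1⁻ = (β1−2)(β1−3) + 1/√β1. Let g > 0 and π5 > 0 be reals, J(g) = χ(χ−1)(4χ−7)/32 + 6π5/g⁴, and Ψ3(g) = (√(E*² + 4A·(J(g) + C·u1⁻·(u1⁻ − 1))) − E*)/(2A). If 0 < u1 ≤ u1⁻ and u2 > 0 satisfy Φ(u1,u2) ≤ J(g), where Φ(u1,u2) = A·u2² − 2B·u1·u2 − C·u1² + D·u2 + C·u1, then u2 ≤ Ψ3(g). -/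
/-- First step of the proof of Lemma 3: in the range 0 < u1 ≤ u1⁻, the master
inequality Φ(u1,u2) ≤ J(g) implies u2 ≤ Ψ3(g). -/
theorem stmt_2 (β1 : ℕ) (hβ1 : 4 < β1)
    (g π5 : ℝ) (hg : 0 < g) (hπ5 : 0 < π5)
    (χ A B C D Estar u1m J Ψ3 u1 u2 : ℝ)
    (hχ : χ = (β1 : ℝ) - 1)
    (hA : A = 2 / ((β1 : ℝ) * ((β1 : ℝ) - 1)))
    (hB : B = 1 / (β1 : ℝ))
    (hC : C = ((β1 : ℝ) - 2) * ((β1 : ℝ) - 3) / 2)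
    (hD : D = (β1 : ℝ) ^ 2 - 5 * (β1 : ℝ) + 7)
    (hu1m : u1m = ((β1 : ℝ) - Real.sqrt β1) / 2)
    (hE : Estar = D - 2 * B * u1m)
    (hJ : J = χ * (χ - 1) * (4 * χ - 7) / 32 + 6 * π5 / g ^ 4)
    (hΨ3 : Ψ3 = (Real.sqrt (Estar ^ 2 + 4 * A * (J + C * u1m * (u1m - 1))) - Estar)
      / (2 * A))
    (hu1pos : 0 < u1) (hu1le : u1 ≤ u1m) (hu2 : 0 < u2)
    (hΦ : A * u2 ^ 2 - 2 * B * u1 * u2 - C * u1 ^ 2 + D * u2 + C * u1 ≤ J) :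
    u2 ≤ Ψ3 := by
  have hb : (5 : ℝ) ≤ (β1 : ℝ) := by exact_mod_cast hβ1
  have hs0 : 0 ≤ Real.sqrt (β1 : ℝ) := Real.sqrt_nonneg _
  have hs : Real.sqrt (β1 : ℝ) ^ 2 = (β1 : ℝ) := Real.sq_sqrt (by linarith)
  have hs2 : 2 ≤ Real.sqrt (β1 : ℝ) := Real.le_sqrt_of_sq_le (by linarith)
  have hm : 1 ≤ u1m := by rw [hu1m]; nlinarith
  have hApos : 0 < A := by
    rw [hA]
    exact div_pos two_pos (mul_pos (by linarith) (by linarith))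
  have hBpos : 0 < B := by
    rw [hB]
    exact div_pos one_pos (by linarith)
  have hCpos : 0 < C := by
    rw [hC]
    exact div_pos (mul_pos (by linarith) (by linarith)) two_pos
  have h1 : 0 ≤ B * ((u1m - u1) * u2) :=
    mul_nonneg hBpos.le (mul_nonneg (by linarith) hu2.le)
  have h2 : 0 ≤ C * ((u1m - u1) * (u1m + u1 - 1)) :=
    mul_nonneg hCpos.le (mul_nonneg (by linarith) (by linarith))
  have key : A * u2 ^ 2 + Estar * u2 ≤ J + C * u1m * (u1m - 1) := by
    rw [hE]
    linarith
  have h3 : 2 * A * u2 + Estar ≤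
      Real.sqrt (Estar ^ 2 + 4 * A * (J + C * u1m * (u1m - 1))) := by
    apply Real.le_sqrt_of_sq_le
    have := mul_le_mul_of_nonneg_left key (by linarith : (0 : ℝ) ≤ 4 * A)
    linarith
  rw [hΨ3, le_div_iff₀ (by linarith)]
  linarith
end

section
/- Let β1 > 4 be an integer and set χ = β1 − 1, u1⁻ = (β1 − √β1)/2, u2* = (χ/(2β1))·(u1⁻)², A = 2/(β1(β1−1)), C = (β1−2)(β1−3)/2, E* = (β1−2)(β1−3) + 1/√β1. Let g > 0 and π5 > 0 be reals and J(g) = χ(χ−1)(4χ−7)/32 + 6π5/g⁴. Then the inequality A·(u2*)² + E*·u2* ≥ J(g) + C·u1⁻·(u1⁻ − 1) holds if and only if g ≥ g_s, where g_s = 4·λ(β1)·π5^{1/4} and λ(β1) = (3β1/(4(β1−1)))^{1/4}, i.e. g_s⁴ = 192·β1·π5/(β1 − 1). Moreover λ(β1) < 1. -/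
/-- Core computation of Lemma 3: the consistency condition is equivalent to
g ≥ g_s = 4·λ(β1)·π5^{1/4}, with g_s⁴ = 192·β1·π5/(β1−1) and λ(β1) < 1. -/
theorem stmt_3 (β1 : ℕ) (hβ1 : 4 < β1)
    (g π5 : ℝ) (hg : 0 < g) (hπ5 : 0 < π5)
    (χ u1m u2s A C Estar J gs lam : ℝ)
    (hχ : χ = (β1 : ℝ) - 1)
    (hu1m : u1m = ((β1 : ℝ) - Real.sqrt β1) / 2)
    (hu2s : u2s = χ / (2 * (β1 : ℝ)) * u1m ^ 2)
    (hA : A = 2 / ((β1 : ℝ) * ((β1 : ℝ) - 1)))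
    (hC : C = ((β1 : ℝ) - 2) * ((β1 : ℝ) - 3) / 2)
    (hE : Estar = ((β1 : ℝ) - 2) * ((β1 : ℝ) - 3) + 1 / Real.sqrt β1)
    (hJ : J = χ * (χ - 1) * (4 * χ - 7) / 32 + 6 * π5 / g ^ 4)
    (hlam : lam = (3 * (β1 : ℝ) / (4 * ((β1 : ℝ) - 1))) ^ ((1 : ℝ) / 4))
    (hgs : gs = 4 * lam * π5 ^ ((1 : ℝ) / 4)) :
    (A * u2s ^ 2 + Estar * u2s ≥ J + C * u1m * (u1m - 1) ↔ gs ≤ g) ∧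
    gs ^ 4 = 192 * (β1 : ℝ) * π5 / ((β1 : ℝ) - 1) ∧
    lam < 1 := by
  have hb : (4 : ℝ) < (β1 : ℝ) := by exact_mod_cast hβ1
  have hs0 : 0 < Real.sqrt (β1 : ℝ) := Real.sqrt_pos.mpr (by linarith)
  have hsq : Real.sqrt (β1 : ℝ) ^ 2 = (β1 : ℝ) := Real.sq_sqrt (by linarith)
  generalize Real.sqrt (β1 : ℝ) = s at *
  generalize (β1 : ℝ) = b at *
  have hb1 : 0 < b - 1 := by linarith
  have hb0 : 0 < b := by linarith
  have hx0 : 0 < 3 * b / (4 * (b - 1)) := by positivity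
  have hpow : ∀ x : ℝ, 0 < x → (x ^ ((1 : ℝ) / 4)) ^ 4 = x := by
    intro x hx
    rw [← Real.rpow_natCast, ← Real.rpow_mul hx.le]
    norm_num
  have hlam0 : 0 < lam := by rw [hlam]; positivity
  have hgs0 : 0 < gs := by rw [hgs]; positivity
  have hgs4 : gs ^ 4 = 192 * b * π5 / (b - 1) := by
    rw [hgs, mul_pow, mul_pow, hpow π5 hπ5, hlam, hpow _ hx0]
    field_simp
    ring
  refine ⟨?_, hgs4, ?_⟩
  · have key : A * u2s ^ 2 + Estar * u2s - (J + C * u1m * (u1m - 1))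
        = (b - 1) / (32 * b) - 6 * π5 / g ^ 4 := by
      have hs1 : s ^ 2 - 1 ≠ 0 := by rw [hsq]; exact hb1.ne'
      rw [hJ, hE, hC, hA, hu2s, hu1m, hχ]
      subst hsq
      generalize 6 * π5 / g ^ 4 = q
      field_simp
      ring
    have h1 : gs ≤ g ↔ gs ^ 4 ≤ g ^ 4 :=
      (pow_le_pow_iff_left₀ hgs0.le hg.le (by norm_num)).symm
    have h2 : 6 * π5 / g ^ 4 ≤ (b - 1) / (32 * b) ↔ gs ^ 4 ≤ g ^ 4 := by
      rw [hgs4, div_le_div_iff₀ (by positivity) (by positivity), div_le_iff₀ hb1]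
      constructor <;> intro h <;> nlinarith
    rw [h1, ← h2]
    constructor <;> intro h <;> linarith
  · rw [hlam]
    apply Real.rpow_lt_one hx0.le _ (by norm_num)
    rw [div_lt_one (by positivity)]
    linarith
end

section
/- Let β1 > 4 be an integer, χ = β1 − 1, and let g > 0, π5 > 0 be reals; set J(g) = χ(χ−1)(4χ−7)/32 + 6π5/g⁴, A = 2/(β1(β1−1)), B = 1/β1, C = (β1−2)(β1−3)/2, D = β1² − 5β1 + 7, E(u1) = D − 2B·u1, Φ(u1,u2) = A·u2² − 2B·u1·u2 − C·u1² + D·u2 + C·u1, and Ψ4^±(u1,g) = (±√(E(u1)² + 4A·(J(g) + C·u1·(u1−1))) − E(u1))/(2A). Then for every real u1 with u1 > u1⁻ = (β1 − √β1)/2 (note u1⁻ > 1 since β1 > 4), the two roots of the quadratic equation Φ(u1,u2) = J(g) in u2 satisfy Ψ4⁻(u1,g) < 0 < Ψ4⁺(u1,g), and for every u2 > 0 one has the equivalence: Φ(u1,u2) ≤ J(g) if and only if u2 ≤ Ψ4⁺(u1,g). -/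
/-- Proposition 1: for u1 > u1⁻, the two roots Ψ4^±(u1,g) of the quadratic
Φ(u1,·) = J(g) have opposite signs, and for u2 > 0 the master inequality
Φ(u1,u2) ≤ J(g) is equivalent to u2 ≤ Ψ4⁺(u1,g). -/
theorem stmt_4 (β1 : ℕ) (hβ1 : 4 < β1)
    (g π5 : ℝ) (hg : 0 < g) (hπ5 : 0 < π5)
    (χ A B C D J : ℝ)
    (hχ : χ = (β1 : ℝ) - 1)
    (hA : A = 2 / ((β1 : ℝ) * ((β1 : ℝ) - 1)))
    (hB : B = 1 / (β1 : ℝ))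
    (hC : C = ((β1 : ℝ) - 2) * ((β1 : ℝ) - 3) / 2)
    (hD : D = (β1 : ℝ) ^ 2 - 5 * (β1 : ℝ) + 7)
    (hJ : J = χ * (χ - 1) * (4 * χ - 7) / 32 + 6 * π5 / g ^ 4)
    (E : ℝ → ℝ) (hE : ∀ u1, E u1 = D - 2 * B * u1)
    (Φ : ℝ → ℝ → ℝ)
    (hΦ : ∀ u1 u2, Φ u1 u2 = A * u2 ^ 2 - 2 * B * u1 * u2 - C * u1 ^ 2
      + D * u2 + C * u1)
    (Ψ4p Ψ4m : ℝ → ℝ)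
    (hΨ4p : ∀ u1, Ψ4p u1 =
      (Real.sqrt (E u1 ^ 2 + 4 * A * (J + C * u1 * (u1 - 1))) - E u1) / (2 * A))
    (hΨ4m : ∀ u1, Ψ4m u1 =
      (-Real.sqrt (E u1 ^ 2 + 4 * A * (J + C * u1 * (u1 - 1))) - E u1) / (2 * A)) :
    ∀ u1 : ℝ, ((β1 : ℝ) - Real.sqrt β1) / 2 < u1 →
      Ψ4m u1 < 0 ∧ 0 < Ψ4p u1 ∧
      ∀ u2 : ℝ, 0 < u2 → (Φ u1 u2 ≤ J ↔ u2 ≤ Ψ4p u1) := by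
  intro u1 hu
  have hb : (5 : ℝ) ≤ (β1 : ℝ) := by exact_mod_cast hβ1
  have hs2 : Real.sqrt (β1 : ℝ) ^ 2 = (β1 : ℝ) := Real.sq_sqrt (by linarith)
  have hs : 2 < Real.sqrt (β1 : ℝ) := by
    apply Real.lt_sqrt_of_sq_lt
    linarith
  have hu1 : 1 < u1 := by nlinarith
  have hA0 : 0 < A := by
    rw [hA]
    have : 0 < (β1 : ℝ) - 1 := by linarith
    positivity
  have hC0 : 0 < C := by
    rw [hC]
    have h2 : 0 < (β1 : ℝ) - 2 := by linarith
    have h3 : 0 < (β1 : ℝ) - 3 := by linarith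
    positivity
  have hJ0 : 0 < J := by
    rw [hJ]
    have h1 : 0 < χ := by linarith
    have h2 : 0 < χ - 1 := by linarith
    have h3 : 0 < 4 * χ - 7 := by linarith
    positivity
  have hK0 : 0 < J + C * u1 * (u1 - 1) := by
    have h1 : 0 < u1 := by linarith
    have h2 : 0 < u1 - 1 := by linarith
    positivity
  have hF : ∀ u2, Φ u1 u2 - J = A * u2 ^ 2 + E u1 * u2 - (J + C * u1 * (u1 - 1)) := by
    intro u2
    rw [hΦ, hE]
    ring
  have hp := hΨ4p u1
  have hm := hΨ4m u1
  generalize J + C * u1 * (u1 - 1) = K at *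
  generalize E u1 = e at *
  have hAK : 0 < A * K := mul_pos hA0 hK0
  have hS2 : Real.sqrt (e ^ 2 + 4 * A * K) ^ 2 = e ^ 2 + 4 * A * K :=
    Real.sq_sqrt (by nlinarith [sq_nonneg e])
  have hSe : |e| < Real.sqrt (e ^ 2 + 4 * A * K) := by
    apply Real.lt_sqrt_of_sq_lt
    rw [sq_abs]
    linarith
  generalize Real.sqrt (e ^ 2 + 4 * A * K) = S at *
  obtain ⟨h1, h2⟩ := abs_lt.mp hSe
  have hm0 : Ψ4m u1 < 0 := by
    rw [hm]
    exact div_neg_of_neg_of_pos (by linarith) (by linarith)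
  have hp0 : 0 < Ψ4p u1 := by
    rw [hp]
    exact div_pos (by linarith) (by linarith)
  refine ⟨hm0, hp0, fun u2 hu2 => ?_⟩
  have hfac : Φ u1 u2 - J = A * (u2 - Ψ4m u1) * (u2 - Ψ4p u1) := by
    rw [hF, hp, hm]
    field_simp
    linear_combination hS2
  have hpos : 0 < A * (u2 - Ψ4m u1) := mul_pos hA0 (by linarith)
  constructor
  · intro h
    by_contra hc
    have := mul_pos hpos (sub_pos.mpr (not_le.mp hc))
    linarith
  · intro h
    have := mul_nonneg hpos.le (sub_nonneg.mpr h)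
    linarith
end

section
/- Let β1 > 4 be an integer, χ = β1 − 1, π5 > 0 a real, and let ε be a real with 0 < ε ≤ √β1/2; set u1⁻ = (β1 − √β1)/2, u_⊙ = β1/2 − ε, u2* = (χ/(2β1))·(u1⁻)², Ψ2(u1) = (1/2)(u1² − u1 + χ/4), g_s = 4·(3β1/(4(β1−1)))^{1/4}·π5^{1/4}, and let Ψ4⁺(u1,g) = (√(E(u1)² + 4A·(J(g) + C·u1·(u1−1))) − E(u1))/(2A) with A = 2/(β1(β1−1)), B = 1/β1, C = (β1−2)(β1−3)/2, D = β1² − 5β1 + 7, E(u1) = D − 2B·u1, J(g) = χ(χ−1)(4χ−7)/32 + 6π5/g⁴. Then: for every real g > g_s and every u1 with u1⁻ ≤ u1 ≤ u_⊙, one has Ψ4⁺(u1,g) < Ψ2(u1); and at g = g_s one has the equality Ψ4⁺(u1⁻, g_s) = u2*. -/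
/-- Lemma 4, first part: for g > g_s, on the range u1⁻ ≤ u1 ≤ u_⊙ one has
Ψ4⁺(u1,g) < Ψ2(u1); and Ψ4⁺(u1⁻, g_s) = u2*. -/
theorem stmt_6 (β1 : ℕ) (hβ1 : 4 < β1)
    (π5 ε : ℝ) (hπ5 : 0 < π5) (hε1 : 0 < ε) (hε2 : ε ≤ Real.sqrt β1 / 2)
    (χ A B C D u1m u2s gs : ℝ)
    (hχ : χ = (β1 : ℝ) - 1)
    (hA : A = 2 / ((β1 : ℝ) * ((β1 : ℝ) - 1)))
    (hB : B = 1 / (β1 : ℝ))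
    (hC : C = ((β1 : ℝ) - 2) * ((β1 : ℝ) - 3) / 2)
    (hD : D = (β1 : ℝ) ^ 2 - 5 * (β1 : ℝ) + 7)
    (hu1m : u1m = ((β1 : ℝ) - Real.sqrt β1) / 2)
    (hu2s : u2s = χ / (2 * (β1 : ℝ)) * u1m ^ 2)
    (hgs : gs = 4 * (3 * (β1 : ℝ) / (4 * ((β1 : ℝ) - 1))) ^ ((1 : ℝ) / 4)
      * π5 ^ ((1 : ℝ) / 4))
    (J : ℝ → ℝ) (hJ : ∀ g, J g = χ * (χ - 1) * (4 * χ - 7) / 32 + 6 * π5 / g ^ 4)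
    (E : ℝ → ℝ) (hE : ∀ u1, E u1 = D - 2 * B * u1)
    (Ψ2 : ℝ → ℝ) (hΨ2 : ∀ u1, Ψ2 u1 = (1 / 2) * (u1 ^ 2 - u1 + χ / 4))
    (Ψ4p : ℝ → ℝ → ℝ)
    (hΨ4p : ∀ u1 g, Ψ4p u1 g =
      (Real.sqrt (E u1 ^ 2 + 4 * A * (J g + C * u1 * (u1 - 1))) - E u1) / (2 * A)) :
    (∀ g : ℝ, gs < g → ∀ u1 : ℝ, u1m ≤ u1 → u1 ≤ (β1 : ℝ) / 2 - ε →
      Ψ4p u1 g < Ψ2 u1) ∧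
    Ψ4p u1m gs = u2s := by
  have hb : (5 : ℝ) ≤ (β1 : ℝ) := by exact_mod_cast hβ1
  generalize (β1 : ℝ) = b at *
  have hs0 : 0 ≤ Real.sqrt b := Real.sqrt_nonneg b
  have hs2 : Real.sqrt b ^ 2 = b := Real.sq_sqrt (by linarith)
  generalize Real.sqrt b = s at *
  have hc : 0 < b - 1 := by linarith
  have hb0 : 0 < b := by linarith
  have hApos : 0 < A := by rw [hA]; positivity
  have hgs0 : 0 < gs := by rw [hgs]; positivity
  have hgs4 : gs ^ 4 = 192 * b * π5 / (b - 1) := by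
    have key : ∀ z : ℝ, 0 < z → (z ^ ((1 : ℝ) / 4)) ^ 4 = z := by
      intro z hz
      rw [← Real.rpow_natCast, ← Real.rpow_mul hz.le]
      norm_num
    rw [hgs, mul_pow, mul_pow, key _ (by positivity), key _ hπ5]
    field_simp
    norm_num
  have hδ : 6 * π5 / gs ^ 4 = (b - 1) / (32 * b) := by
    rw [hgs4]
    field_simp
    norm_num
  have hid : ∀ u g : ℝ, E u ^ 2 + 4 * A * (J g + C * u * (u - 1)) =
      (2 * A * Ψ2 u + E u) ^ 2 - 4 * A * (((b / 2 - u) ^ 2 - b / 4) *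
        ((b / 2 - u) ^ 2 - (b - 2) * (2 * b - 3) / 4) / (2 * b * (b - 1))
        + ((b - 1) / (32 * b) - 6 * π5 / g ^ 4)) := by
    intro u g
    rw [hJ, hE, hΨ2, hC, hA, hB, hD, hχ]
    generalize 6 * π5 / g ^ 4 = q
    field_simp
    ring
  have hpos : ∀ u : ℝ, u ≤ b / 2 → 0 < 2 * A * Ψ2 u + E u := by
    intro u hu
    have h1 : 0 < Ψ2 u := by
      rw [hΨ2, hχ]
      nlinarith [sq_nonneg (u - 1 / 2)]
    have h2 : 0 < E u := by
      rw [hE, hD, hB]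
      have : 2 * (1 / b) * u ≤ 1 := by
        have : 2 * (1 / b) * u = 2 * u / b := by ring
        rw [this, div_le_one hb0]
        linarith
      nlinarith
    positivity
  constructor
  · intro g hg u hu1 hu2
    rw [hΨ4p, div_lt_iff₀ (by positivity), sub_lt_iff_lt_add]
    have hp := hpos u (by linarith)
    rw [show Ψ2 u * (2 * A) + E u = 2 * A * Ψ2 u + E u by ring, Real.sqrt_lt' hp, hid]
    have hg4 : 6 * π5 / g ^ 4 < (b - 1) / (32 * b) := by
      rw [← hδ]
      gcongr
    have hT : (b / 2 - u) ^ 2 - b / 4 ≤ 0 := by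
      have h1 : 0 ≤ b / 2 - u := by linarith
      have h2 : b / 2 - u ≤ s / 2 := by linarith
      nlinarith
    have hT2 : (b / 2 - u) ^ 2 - (b - 2) * (2 * b - 3) / 4 ≤ 0 := by nlinarith
    have hG : 0 ≤ ((b / 2 - u) ^ 2 - b / 4) *
        ((b / 2 - u) ^ 2 - (b - 2) * (2 * b - 3) / 4) / (2 * b * (b - 1)) :=
      div_nonneg (mul_nonneg_of_nonpos_of_nonpos hT hT2) (by positivity)
    have := mul_pos (mul_pos (by norm_num : (0 : ℝ) < 4) hApos)
      (add_pos_of_nonneg_of_pos hG (sub_pos.2 hg4))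
    linarith
  · have hu : Ψ2 u1m = u2s := by
      rw [hΨ2, hu2s, hχ, hu1m, ← hs2]
      have : s ≠ 0 := by
        rintro rfl
        norm_num at hs2
        linarith
      field_simp
      ring
    have hz : (b / 2 - u1m) ^ 2 - b / 4 = 0 := by
      rw [hu1m]
      nlinarith
    rw [hΨ4p, hid, hz, hδ, zero_mul, zero_div, sub_self, add_zero, mul_zero, sub_zero,
      Real.sqrt_sq (hpos u1m (by linarith)).le, hu]
    field_simp
    ring
end

section
/- Let β1 > 4 be an integer, χ = β1 − 1, π5 > 0 a real, u1⁻ = (β1 − √β1)/2, Ψ2(u1) = (1/2)(u1² − u1 + χ/4), g_s = 4·(3β1/(4(β1−1)))^{1/4}·π5^{1/4}, and Ψ4⁺(u1,g) = (√(E(u1)² + 4A·(J(g) + C·u1·(u1−1))) − E(u1))/(2A) with A = 2/(β1(β1−1)), B = 1/β1, C = (β1−2)(β1−3)/2, D = β1² − 5β1 + 7, E(u1) = D − 2B·u1, J(g) = χ(χ−1)(4χ−7)/32 + 6π5/g⁴. If 0 < g < g_s, then there exists a real u1• > u1⁻ such that Ψ4⁺(u1,g) > Ψ2(u1) for every u1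 with u1⁻ ≤ u1 < u1•. -/
/-- Lemma 4, second part: if 0 < g < g_s then Ψ4⁺(u1,g) > Ψ2(u1) on a nonempty
interval [u1⁻, u1•) to the right of u1⁻. -/
theorem stmt_7 (β1 : ℕ) (hβ1 : 4 < β1)
    (π5 g : ℝ) (hπ5 : 0 < π5)
    (χ A B C D u1m gs : ℝ)
    (hχ : χ = (β1 : ℝ) - 1)
    (hA : A = 2 / ((β1 : ℝ) * ((β1 : ℝ) - 1)))
    (hB : B = 1 / (β1 : ℝ))
    (hC : C = ((β1 : ℝ) - 2) * ((β1 : ℝ) - 3) / 2)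
    (hD : D = (β1 : ℝ) ^ 2 - 5 * (β1 : ℝ) + 7)
    (hu1m : u1m = ((β1 : ℝ) - Real.sqrt β1) / 2)
    (hgs : gs = 4 * (3 * (β1 : ℝ) / (4 * ((β1 : ℝ) - 1))) ^ ((1 : ℝ) / 4)
      * π5 ^ ((1 : ℝ) / 4))
    (J : ℝ → ℝ) (hJ : ∀ g', J g' = χ * (χ - 1) * (4 * χ - 7) / 32 + 6 * π5 / g' ^ 4)
    (E : ℝ → ℝ) (hE : ∀ u1, E u1 = D - 2 * B * u1)
    (Ψ2 : ℝ → ℝ) (hΨ2 : ∀ u1, Ψ2 u1 = (1 / 2) * (u1 ^ 2 - u1 + χ / 4))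
    (Ψ4p : ℝ → ℝ → ℝ)
    (hΨ4p : ∀ u1 g', Ψ4p u1 g' =
      (Real.sqrt (E u1 ^ 2 + 4 * A * (J g' + C * u1 * (u1 - 1))) - E u1) / (2 * A))
    (hg0 : 0 < g) (hggs : g < gs) :
    ∃ u1b : ℝ, u1m < u1b ∧
      ∀ u1 : ℝ, u1m ≤ u1 → u1 < u1b → Ψ2 u1 < Ψ4p u1 g := by
  have hb : (4 : ℝ) < (β1 : ℝ) := by exact_mod_cast hβ1
  generalize (β1 : ℝ) = b at *
  have hb0 : 0 < b := by linarith
  have hb1 : 0 < b - 1 := by linarith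
  have hA0 : 0 < A := by rw [hA]; positivity
  -- the value of `g_s ^ 4`
  have hgs4 : gs ^ 4 = 192 * b / (b - 1) * π5 := by
    have hq : 0 ≤ 3 * b / (4 * (b - 1)) := by positivity
    have h1 : ∀ x : ℝ, 0 ≤ x → (x ^ ((1 : ℝ) / 4)) ^ 4 = x := by
      intro x hx
      rw [← Real.rpow_natCast, ← Real.rpow_mul hx]
      norm_num
    rw [hgs, mul_pow, mul_pow, h1 _ hq, h1 _ hπ5.le]
    field_simp
    ring
  have hg4 : g ^ 4 < 192 * b / (b - 1) * π5 := by
    rw [← hgs4]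
    exact pow_lt_pow_left₀ hggs hg0.le (by norm_num)
  have hkey : (b - 1) / (32 * b) < 6 * π5 / g ^ 4 := by
    have hgp : 0 < g ^ 4 := by positivity
    rw [div_lt_div_iff₀ (by positivity) hgp]
    have h2 : (b - 1) * g ^ 4 < (b - 1) * (192 * b / (b - 1) * π5) :=
      mul_lt_mul_of_pos_left hg4 hb1
    have h3 : (b - 1) * (192 * b / (b - 1) * π5) = 192 * b * π5 := by
      field_simp
    linarith
  -- the inequality at the left end point
  have hpt : Ψ2 u1m < Ψ4p u1m g := by
    rw [hΨ4p, lt_div_iff₀ (by positivity), lt_sub_iff_add_lt]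
    apply Real.lt_sqrt_of_sq_lt
    have hid : A * Ψ2 u1m ^ 2 + E u1m * Ψ2 u1m - C * u1m * (u1m - 1)
        = χ * (χ - 1) * (4 * χ - 7) / 32 + (b - 1) / (32 * b) := by
      obtain ⟨s, hs, hs0⟩ : ∃ s, s = Real.sqrt b ∧ 0 < s := ⟨_, rfl, Real.sqrt_pos.2 hb0⟩
      have hsb : b = s ^ 2 := by rw [hs, Real.sq_sqrt hb0.le]
      rw [← hs] at hu1m
      rw [hΨ2, hE, hA, hB, hC, hD, hχ, hu1m]
      clear hgs hgs4 hg4 hkey hs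
      subst hsb
      have : s ^ 2 - 1 ≠ 0 := hb1.ne'
      field_simp
      ring
    have hlt : A * Ψ2 u1m ^ 2 + E u1m * Ψ2 u1m - C * u1m * (u1m - 1) < J g := by
      rw [hid, hJ]; linarith
    have := mul_lt_mul_of_pos_left hlt (show 0 < 4 * A by positivity)
    linarith
  have hEc : Continuous E := by
    rw [funext hE]; fun_prop
  have hc2 : Continuous Ψ2 := by
    rw [funext hΨ2]; fun_prop
  have hc4 : Continuous (fun u => Ψ4p u g) := by
    simp only [hΨ4p]
    fun_prop
  obtain ⟨ε, hε, h⟩ := Metric.isOpen_iff.1 (isOpen_lt hc2 hc4) u1m hpt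
  refine ⟨u1m + ε, by linarith, fun u h1 h2 => h ?_⟩
  rw [Metric.mem_ball, Real.dist_eq, abs_lt]
  constructor <;> linarith
end

section
/- Let β1 > 4 be an integer, χ = β1 − 1, π5 > 0 a real, and ε a real with 0 < ε < √β1/2; set u1⁻ = (β1 − √β1)/2, u_⊙ = β1/2 − ε, Ψ2(u1) = (1/2)(u1² − u1 + χ/4), g_s = 4·(3β1/(4(β1−1)))^{1/4}·π5^{1/4}, A = 2/(β1(β1−1)), B = 1/β1, C = (β1−2)(β1−3)/2, D = β1² − 5β1 + 7, J(g) = χ(χ−1)(4χ−7)/32 + 6π5/g⁴, and Φ(u1,u2) = A·u2² − 2B·u1·u2 − C·u1² + D·u2 + C·u1. If 0 < g < g_s, then there exist reals u1 and u2 with u1⁻ < u1 < u_⊙ and u2 > Ψ2(u1) such that Φ(u1,u2) ≤ J(g). -/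
/-- Analytic content of Theorem 1: if 0 < g < g_s then the master inequality
Φ(u1,u2) ≤ J(g) admits points (u1,u2) with u1⁻ < u1 < u_⊙ and u2 > Ψ2(u1). -/
theorem stmt_9 (β1 : ℕ) (hβ1 : 4 < β1)
    (π5 ε g : ℝ) (hπ5 : 0 < π5) (hε1 : 0 < ε) (hε2 : ε < Real.sqrt β1 / 2)
    (χ A B C D u1m gs J : ℝ)
    (hχ : χ = (β1 : ℝ) - 1)
    (hA : A = 2 / ((β1 : ℝ) * ((β1 : ℝ) - 1)))
    (hB : B = 1 / (β1 : ℝ))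
    (hC : C = ((β1 : ℝ) - 2) * ((β1 : ℝ) - 3) / 2)
    (hD : D = (β1 : ℝ) ^ 2 - 5 * (β1 : ℝ) + 7)
    (hu1m : u1m = ((β1 : ℝ) - Real.sqrt β1) / 2)
    (hgs : gs = 4 * (3 * (β1 : ℝ) / (4 * ((β1 : ℝ) - 1))) ^ ((1 : ℝ) / 4)
      * π5 ^ ((1 : ℝ) / 4))
    (hJ : J = χ * (χ - 1) * (4 * χ - 7) / 32 + 6 * π5 / g ^ 4)
    (Ψ2 : ℝ → ℝ) (hΨ2 : ∀ u1, Ψ2 u1 = (1 / 2) * (u1 ^ 2 - u1 + χ / 4))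
    (hg0 : 0 < g) (hggs : g < gs) :
    ∃ u1 u2 : ℝ, u1m < u1 ∧ u1 < (β1 : ℝ) / 2 - ε ∧ Ψ2 u1 < u2 ∧
      A * u2 ^ 2 - 2 * B * u1 * u2 - C * u1 ^ 2 + D * u2 + C * u1 ≤ J := by
  set b : ℝ := (β1 : ℝ) with hb
  have hb4 : (4 : ℝ) < b := by rw [hb]; exact_mod_cast hβ1
  obtain ⟨s, hs⟩ : ∃ s, s = Real.sqrt b := ⟨_, rfl⟩
  have hs2 : b = s ^ 2 := by rw [hs, Real.sq_sqrt (by linarith)]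
  have hχ0 : 0 < b - 1 := by linarith
  have hb0 : 0 < b := by linarith
  have hg4 : g ^ 4 < 192 * b * π5 / (b - 1) := by
    have h1 : g ^ 4 < gs ^ 4 := pow_lt_pow_left₀ hggs hg0.le (by norm_num)
    have key : ∀ x : ℝ, 0 ≤ x → (x ^ ((1 : ℝ) / 4)) ^ 4 = x := by
      intro x hx
      rw [← Real.rpow_natCast, ← Real.rpow_mul hx]
      norm_num
    have h2 : gs ^ 4 = 192 * b * π5 / (b - 1) := by
      rw [hgs, mul_pow, mul_pow, key _ (by positivity), key _ hπ5.le]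
      field_simp
      ring
    rwa [h2] at h1
  have hlow : (b - 1) / (32 * b) < 6 * π5 / g ^ 4 := by
    rw [lt_div_iff₀ hχ0] at hg4
    rw [div_lt_div_iff₀ (by positivity) (by positivity)]
    linarith
  have hf0 : A * (Ψ2 u1m) ^ 2 - 2 * B * u1m * (Ψ2 u1m) - C * u1m ^ 2 + D * (Ψ2 u1m)
      + C * u1m < J := by
    have e : A * (Ψ2 u1m) ^ 2 - 2 * B * u1m * (Ψ2 u1m) - C * u1m ^ 2 + D * (Ψ2 u1m)
      + C * u1m = χ * (χ - 1) * (4 * χ - 7) / 32 + (b - 1) / (32 * b) := by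
      rw [hΨ2, hu1m, hA, hB, hC, hD, hχ, ← hs]
      clear_value b
      subst hs2
      have h1 : s ^ 2 - 1 ≠ 0 := hχ0.ne'
      have h2 : s ≠ 0 := by rintro rfl; norm_num at hb0
      field_simp
      ring
    rw [e, hJ]
    linarith
  let f : ℝ → ℝ := fun d => A * (Ψ2 (u1m + d) + d) ^ 2 - 2 * B * (u1m + d) * (Ψ2 (u1m + d) + d)
    - C * (u1m + d) ^ 2 + D * (Ψ2 (u1m + d) + d) + C * (u1m + d)
  have hΨc : Continuous Ψ2 := by
    rw [funext hΨ2]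
    fun_prop
  have hfc : Continuous f := by fun_prop
  have hev : ∀ᶠ d in nhdsWithin (0 : ℝ) (Set.Ioi 0), f d < J := by
    apply Filter.Eventually.filter_mono nhdsWithin_le_nhds
    apply hfc.continuousAt.eventually_lt continuousAt_const
    simpa [f] using hf0
  have hev2 : ∀ᶠ d in nhdsWithin (0 : ℝ) (Set.Ioi 0), d ∈ Set.Ioo 0 (s / 2 - ε) :=
    Ioo_mem_nhdsGT (by rw [hs]; linarith)
  obtain ⟨d, hd1, hd2, hd3⟩ := (hev.and hev2).exists
  refine ⟨u1m + d, Ψ2 (u1m + d) + d, by linarith, ?_, by linarith, hd1.le⟩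
  rw [hu1m, ← hs]
  linarith
end

section
/- Let T ⊆ ℕ be a numerical semigroup with T ≠ ℕ, let a ≥ 2 and d ≥ 2 be natural numbers with gcd(a, d) = 1 and d ∈ T, and let S be the additive submonoid of ℕ generated by {a·t : t ∈ T} ∪ {d}. Then S is a numerical semigroup with S ≠ ℕ, and S is symmetric if and only if T is symmetric. -/
/-- The Frobenius number of a numerical semigroup: the largest natural number
not in the semigroup. -/
noncomputable def frobNum (S : AddSubmonoid ℕ) : ℕ := sSup {n : ℕ | n ∉ S}

/-- A numerical semigroup is symmetric if, for every gap n, the difference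
F(S) − n belongs to the semigroup. -/
def IsSymmetricNS (S : AddSubmonoid ℕ) : Prop :=
  ∀ n : ℕ, n ∉ S → frobNum S - n ∈ S

/-- Membership of an integer in a submonoid of the naturals. -/
def ZMem (S : AddSubmonoid ℕ) (z : ℤ) : Prop := ∃ n ∈ S, (n : ℤ) = z

lemma zmem_nat (S : AddSubmonoid ℕ) (n : ℕ) : ZMem S n ↔ n ∈ S := by
  constructor
  · rintro ⟨m, hm, h⟩
    have : m = n := by exact_mod_cast h
    exact this ▸ hm
  · intro h
    exact ⟨n, h, rfl⟩

lemma zmem_nonneg {S : AddSubmonoid ℕ} {z : ℤ} (h : ZMem S z) : 0 ≤ z := by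
  obtain ⟨m, _, h⟩ := h
  omega

lemma zmem_add {S : AddSubmonoid ℕ} {y z : ℤ} (hy : ZMem S y) (hz : ZMem S z) :
    ZMem S (y + z) := by
  obtain ⟨m, hm, rfl⟩ := hy
  obtain ⟨n, hn, rfl⟩ := hz
  exact ⟨m + n, S.add_mem hm hn, by push_cast; rfl⟩

lemma zmem_mul {S : AddSubmonoid ℕ} {d : ℕ} (hd : d ∈ S) {k : ℤ} (hk : 0 ≤ k) :
    ZMem S (k * d) := by
  obtain ⟨n, rfl⟩ := Int.eq_ofNat_of_zero_le hk
  exact ⟨n * d, by simpa using S.nsmul_mem hd n, by push_cast; rfl⟩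

lemma frob_spec (S : AddSubmonoid ℕ) (hfin : ((S : Set ℕ)ᶜ).Finite) (hne : S ≠ ⊤) :
    ¬ ZMem S (frobNum S) ∧ ∀ z : ℤ, (frobNum S : ℤ) < z → ZMem S z := by
  have hset : {n : ℕ | n ∉ S} = (S : Set ℕ)ᶜ := rfl
  constructor
  · rw [zmem_nat]
    have hn : ({n : ℕ | n ∉ S}).Nonempty := by
      by_contra hcon
      apply hne
      rw [eq_top_iff]
      intro x _
      by_contra hx
      exact hcon ⟨x, hx⟩
    exact Nat.sSup_mem hn (hset ▸ hfin.bddAbove)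
  · intro z hz
    obtain ⟨n, rfl⟩ := Int.eq_ofNat_of_zero_le (show 0 ≤ z by omega)
    change ZMem S ((n : ℕ) : ℤ)
    rw [zmem_nat]
    by_contra hcon
    have : n ≤ frobNum S := le_csSup (hset ▸ hfin.bddAbove) hcon
    omega

lemma frob_unique (S : AddSubmonoid ℕ) (hfin : ((S : Set ℕ)ᶜ).Finite) (hne : S ≠ ⊤)
    (f : ℤ) (h1 : ¬ ZMem S f) (h2 : ∀ z : ℤ, f < z → ZMem S z) : (frobNum S : ℤ) = f := by
  obtain ⟨g1, g2⟩ := frob_spec S hfin hne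
  rcases lt_trichotomy (frobNum S : ℤ) f with h | h | h
  · exact absurd (g2 _ h) h1
  · exact h
  · exact absurd (h2 _ h) g1

lemma symm_iff (S : AddSubmonoid ℕ) (hfin : ((S : Set ℕ)ᶜ).Finite) (hne : S ≠ ⊤) :
    IsSymmetricNS S ↔ ∀ z : ℤ, ¬ ZMem S z → ZMem S (frobNum S - z) := by
  obtain ⟨g1, g2⟩ := frob_spec S hfin hne
  constructor
  · intro h z hz
    by_cases h0 : z < 0
    · exact g2 _ (by omega)
    · obtain ⟨n, rfl⟩ := Int.eq_ofNat_of_zero_le (show 0 ≤ z by omega)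
      have hle : ¬ ((frobNum S : ℤ) < n) := fun hh => hz (g2 _ hh)
      have := h n (fun hh => hz ((zmem_nat S n).2 hh))
      exact ⟨_, this, by omega⟩
  · intro h n hn
    have hn' : ¬ ZMem S n := fun hh => hn ((zmem_nat S n).1 hh)
    have hle : ¬ ((frobNum S : ℤ) < n) := fun hh => hn' (g2 _ hh)
    obtain ⟨m, hm, he⟩ := h n hn'
    have : frobNum S - n = m := by omega
    exact this ▸ hm

lemma rep_exists (a d : ℕ) (ha : 2 ≤ a) (hgcd : Nat.gcd a d = 1) (z : ℤ) :
    ∃ x k : ℤ, 0 ≤ k ∧ k < a ∧ z = a * x + k * d := by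
  have hb := Nat.gcd_eq_gcd_ab a d
  rw [hgcd] at hb
  set u := Nat.gcdA a d
  set v := Nat.gcdB a d
  have hm := Int.emod_add_mul_ediv (v * z) a
  refine ⟨u * z + d * (v * z / a), (v * z) % a, Int.emod_nonneg _ (by omega),
    Int.emod_lt_of_pos _ (by omega), ?_⟩
  push_cast at hb
  linear_combination z * hb - d * hm

lemma mem_S_iff (T : AddSubmonoid ℕ) (a d n : ℕ) :
    n ∈ AddSubmonoid.closure ((fun t => a * t) '' (T : Set ℕ) ∪ {d}) ↔
      ∃ t ∈ T, ∃ k : ℕ, n = a * t + k * d := by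
  constructor
  · intro h
    induction h using AddSubmonoid.closure_induction with
    | mem x hx =>
      rcases hx with ⟨t, ht, rfl⟩ | hx
      · exact ⟨t, ht, 0, by simp⟩
      · exact ⟨0, T.zero_mem, 1, by simpa using hx⟩
    | zero => exact ⟨0, T.zero_mem, 0, by simp⟩
    | add x y _ _ hx hy =>
      obtain ⟨t, ht, k, rfl⟩ := hx
      obtain ⟨t', ht', k', rfl⟩ := hy
      exact ⟨t + t', T.add_mem ht ht', k + k', by ring⟩
  · rintro ⟨t, ht, k, rfl⟩
    refine AddSubmonoid.add_mem _ (AddSubmonoid.subset_closure (Or.inl ⟨t, ht, rfl⟩)) ?_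
    have : d ∈ AddSubmonoid.closure ((fun t => a * t) '' (T : Set ℕ) ∪ {d}) :=
      AddSubmonoid.subset_closure (Or.inr rfl)
    simpa using AddSubmonoid.nsmul_mem _ this k

lemma key (T : AddSubmonoid ℕ) (a d : ℕ) (ha : 2 ≤ a)
    (hgcd : Nat.gcd a d = 1) (hdT : d ∈ T) (x k : ℤ) (hk : 0 ≤ k) (hka : k < a) :
    ZMem (AddSubmonoid.closure ((fun t => a * t) '' (T : Set ℕ) ∪ {d})) (a * x + k * d) ↔
      ZMem T x := by
  constructor
  · rintro ⟨n, hn, he⟩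
    rw [mem_S_iff] at hn
    obtain ⟨t, ht, j, rfl⟩ := hn
    push_cast at he
    have hdvd : (a : ℤ) ∣ (j - k) * d := ⟨x - t, by linear_combination he⟩
    have hco : IsCoprime (a : ℤ) (d : ℤ) := Nat.isCoprime_iff_coprime.2 hgcd
    obtain ⟨q, hq⟩ := hco.dvd_of_dvd_mul_right hdvd
    have hq0 : 0 ≤ q := by
      by_contra hcon
      have : (a : ℤ) * q ≤ a * (-1) := by
        apply mul_le_mul_of_nonneg_left <;> omega
      omega
    have hx : x = t + q * d := by
      have ha0 : (a : ℤ) ≠ 0 := by omega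
      apply mul_left_cancel₀ ha0
      linear_combination d * hq - he
    rw [hx]
    exact zmem_add ((zmem_nat T t).2 ht) (zmem_mul hdT hq0)
  · rintro ⟨t, ht, rfl⟩
    obtain ⟨j, rfl⟩ := Int.eq_ofNat_of_zero_le hk
    exact ⟨a * t + j * d, (mem_S_iff T a d _).2 ⟨t, ht, j, rfl⟩, by push_cast; rfl⟩

/-- Watanabe's Lemma (symmetry statement): for T a numerical semigroup,
gcd(a,d) = 1, d ∈ T, the semigroup S = ⟨aT, d⟩ is a numerical semigroup
(≠ ℕ) which is symmetric iff T is symmetric. -/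
theorem stmt_10 (T : AddSubmonoid ℕ)
    (hTfin : ((T : Set ℕ)ᶜ).Finite) (hTne : T ≠ ⊤)
    (a d : ℕ) (ha : 2 ≤ a) (hd : 2 ≤ d)
    (hgcd : Nat.gcd a d = 1) (hdT : d ∈ T)
    (S : AddSubmonoid ℕ)
    (hS : S = AddSubmonoid.closure ((fun t => a * t) '' (T : Set ℕ) ∪ {d})) :
    ((S : Set ℕ)ᶜ).Finite ∧ S ≠ ⊤ ∧ (IsSymmetricNS S ↔ IsSymmetricNS T) := by
  subst hS
  have hkey := key T a d ha hgcd hdT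
  have hrep := rep_exists a d ha hgcd
  set S := AddSubmonoid.closure ((fun t => a * t) '' (T : Set ℕ) ∪ {d})
  obtain ⟨f1, f2⟩ := frob_spec T hTfin hTne
  set F : ℤ := (frobNum T : ℤ) with hF
  have g1 : ¬ ZMem S (a * F + (a - 1) * d) := by
    rw [hkey F (a - 1) (by omega) (by omega)]
    exact f1
  have g2 : ∀ z : ℤ, a * F + (a - 1) * d < z → ZMem S z := by
    intro z hz
    obtain ⟨x, k, hk, hka, rfl⟩ := hrep z
    rw [hkey x k hk hka]
    apply f2
    by_contra hcon
    have h1 : (a : ℤ) * x ≤ a * F := mul_le_mul_of_nonneg_left (by omega) (by omega)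
    have h2 : k * (d : ℤ) ≤ (a - 1) * d := mul_le_mul_of_nonneg_right (by omega) (by omega)
    omega
  have hfin : ((S : Set ℕ)ᶜ).Finite := by
    apply (Set.finite_Iic (a * F + (a - 1) * d).toNat).subset
    intro n hn
    by_contra hcon
    apply hn
    simp only [Set.mem_Iic, not_le] at hcon
    exact (zmem_nat S n).1 (g2 n (by omega))
  have hne : S ≠ ⊤ := by
    intro h
    apply g1
    have hnn : (0 : ℤ) ≤ a * F + (a - 1) * d := by
      have : (0 : ℤ) ≤ a - 1 := by omega
      exact add_nonneg (mul_nonneg (by omega) (by omega)) (mul_nonneg this (by omega))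
    refine ⟨(a * F + (a - 1) * d).toNat, ?_, by omega⟩
    rw [h]
    trivial
  refine ⟨hfin, hne, ?_⟩
  rw [symm_iff S hfin hne, symm_iff T hTfin hTne, frob_unique S hfin hne _ g1 g2]
  constructor
  · intro h x hx
    have := h (a * x + 0 * d) (by rwa [hkey x 0 le_rfl (by omega)])
    rw [← hkey (F - x) (a - 1) (by omega) (by omega)]
    convert this using 1
    ring
  · intro h z hz
    obtain ⟨x, k, hk, hka, rfl⟩ := hrep z
    rw [hkey x k hk hka] at hz
    have := h x hz
    rw [← hkey (F - x) (a - 1 - k) (by omega) (by omega)] at this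
    convert this using 1
    ring
end

section
/- Let T ⊆ ℕ be a numerical semigroup with T ≠ ℕ, let a ≥ 2 and d ≥ 2 be natural numbers with gcd(a, d) = 1 and d ∈ T, and let S be the additive submonoid of ℕ generated by {a·t : t ∈ T} ∪ {d}. Then the Frobenius numbers satisfy F(S) = a·F(T) + (a − 1)·d. -/
/-- Brauer's relation (64): the Frobenius number of the Watanabe extension
S = ⟨aT, d⟩ satisfies F(S) = a·F(T) + (a−1)·d. -/
theorem stmt_11 (T : AddSubmonoid ℕ)
    (hTfin : ((T : Set ℕ)ᶜ).Finite) (hTne : T ≠ ⊤)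
    (a d : ℕ) (ha : 2 ≤ a) (hd : 2 ≤ d)
    (hgcd : Nat.gcd a d = 1) (hdT : d ∈ T)
    (S : AddSubmonoid ℕ)
    (hS : S = AddSubmonoid.closure ((fun t => a * t) '' (T : Set ℕ) ∪ {d})) :
    frobNum S = a * frobNum T + (a - 1) * d := by
  have memS : ∀ n, n ∈ S ↔ ∃ t ∈ T, ∃ k : ℕ, n = a * t + k * d := by
    intro n
    rw [hS]
    constructor
    · intro h
      induction h using AddSubmonoid.closure_induction with
      | mem x hx =>
        rcases hx with ⟨t, ht, rfl⟩ | hx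
        · exact ⟨t, ht, 0, by simp⟩
        · exact ⟨0, T.zero_mem, 1, by simpa using hx⟩
      | zero => exact ⟨0, T.zero_mem, 0, by simp⟩
      | add x y _ _ hx hy =>
        obtain ⟨t, ht, k, rfl⟩ := hx
        obtain ⟨u, hu, l, rfl⟩ := hy
        exact ⟨t + u, T.add_mem ht hu, k + l, by ring⟩
    · rintro ⟨t, ht, k, rfl⟩
      refine AddSubmonoid.add_mem _ (AddSubmonoid.subset_closure (Or.inl ⟨t, ht, rfl⟩)) ?_
      have h := AddSubmonoid.nsmul_mem
        (AddSubmonoid.closure ((fun t => a * t) '' (T : Set ℕ) ∪ {d}))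
        (AddSubmonoid.subset_closure (Or.inr rfl)) k
      simpa using h
  have hbdd : BddAbove {n : ℕ | n ∉ T} := hTfin.bddAbove
  have hne : {n : ℕ | n ∉ T}.Nonempty := by
    by_contra h
    apply hTne
    rw [Set.not_nonempty_iff_eq_empty] at h
    ext n
    simp only [AddSubmonoid.mem_top, iff_true]
    by_contra hn
    have : n ∈ {n : ℕ | n ∉ T} := hn
    rw [h] at this
    exact this
  have hF : frobNum T ∉ T := Nat.sSup_mem hne hbdd
  have hgt : ∀ n, frobNum T < n → n ∈ T := by
    intro n hn
    by_contra h
    exact absurd (le_csSup hbdd h) (not_le.mpr hn)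
  generalize frobNum T = F at hF hgt
  obtain ⟨b, rfl⟩ : ∃ b, a = b + 1 := ⟨a - 1, by omega⟩
  simp only [Nat.add_sub_cancel]
  apply IsGreatest.csSup_eq
  constructor
  · intro h
    obtain ⟨t, ht, k, hk⟩ := (memS _).1 h
    have h1 : (b + 1) * (F + d) = (b + 1) * t + (k + 1) * d := by linarith
    have h2 : (b + 1) ∣ (k + 1) * d := by
      have : (b + 1) ∣ (b + 1) * t + (k + 1) * d := ⟨_, h1.symm⟩
      exact (Nat.dvd_add_right (Dvd.intro _ rfl)).1 this
    obtain ⟨m, hm⟩ := Nat.Coprime.dvd_of_dvd_mul_right hgcd h2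
    obtain _ | m := m
    · simp at hm
    rw [hm] at h1
    have h3 : F + d = t + (m + 1) * d := by
      apply Nat.eq_of_mul_eq_mul_left (Nat.succ_pos b)
      rw [Nat.succ_eq_add_one, h1]; ring
    have h4 : F = t + m • d := by
      rw [smul_eq_mul]; linarith
    exact hF (h4 ▸ T.add_mem ht (T.nsmul_mem hdT m))
  · intro n hn
    by_contra hlt
    push Not at hlt
    apply hn
    obtain ⟨m, hm⟩ := Nat.exists_mul_mod_eq_one_of_coprime (Nat.Coprime.symm hgcd) (by omega : 1 < b + 1)
    have hkm : ((m * n) % (b + 1)) * d ≡ n [MOD (b + 1)] := by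
      have e1 : (d * m) ≡ 1 [MOD (b + 1)] := by
        rw [Nat.ModEq, hm.2, Nat.mod_eq_of_lt (by omega)]
      calc ((m * n) % (b + 1)) * d ≡ (m * n) * d [MOD (b + 1)] := (Nat.mod_modEq _ _).mul_right d
        _ = d * m * n := by ring
        _ ≡ 1 * n [MOD (b + 1)] := e1.mul_right n
        _ = n := one_mul n
    have hk : (m * n) % (b + 1) ≤ b := Nat.le_of_lt_succ (Nat.mod_lt _ (Nat.succ_pos b))
    generalize (m * n) % (b + 1) = k at hkm hk
    have hkd : k * d ≤ b * d := Nat.mul_le_mul_right d hk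
    have hle : k * d ≤ n := by omega
    obtain ⟨t, ht⟩ := (Nat.modEq_iff_dvd' hle).1 hkm
    refine (memS n).2 ⟨t, hgt t ?_, k, by omega⟩
    apply Nat.lt_of_mul_lt_mul_left (a := b + 1)
    omega
end

section
/- Let T ⊆ ℕ be the numerical semigroup generated by positive integers δ1, δ2, δ3, δ4 with gcd(δ1,δ2,δ3,δ4) = 1 and T ≠ ℕ, let a ≥ 2 and d ≥ 2 be natural numbers with gcd(a, d) = 1 and d ∈ T, and let S be the additive submonoid of ℕ generated by {a·δ1, a·δ2, a·δ3, a·δ4, d}. Write π4 = δ1·δ2·δ3·δ4. Assume the lower bound F(T) ≥ (25·π4)^{1/3} − (δ1+δ2+δ3+δ4) for the Frobenius number of T. Then the Frobenius number of S satisfies F(S) ≥ g_w − (a·(δ1+δ2+δ3+δ4) + d), where g_w = a·((25·π4)^{1/3} + d). -/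
theorem aux_bdd (s : Set ℕ) (h : ∀ k, (∀ x ∈ s, k ∣ x) → k ∣ 1) :
    BddAbove {n : ℕ | n ∉ AddSubmonoid.closure s} := by
  obtain ⟨n, hn⟩ := Nat.exists_mem_closure_of_ge s
  refine ⟨n, fun m hm => ?_⟩
  by_contra hlt
  push Not at hlt
  refine hm (hn m hlt.le ?_)
  exact (h _ (fun x hx => Nat.setGcd_dvd_of_mem hx)).trans (one_dvd m)

/-- Lemma 6: lower bound for the Frobenius number of the Watanabe extension
S = ⟨aδ1, aδ2, aδ3, aδ4, d⟩ of a 4-generated numerical semigroup T, assuming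
the lower bound F(T) ≥ (25π4)^{1/3} − Σδj. -/
theorem stmt_12 (δ1 δ2 δ3 δ4 : ℕ)
    (h1 : 0 < δ1) (h2 : 0 < δ2) (h3 : 0 < δ3) (h4 : 0 < δ4)
    (hgcd : Nat.gcd (Nat.gcd (Nat.gcd δ1 δ2) δ3) δ4 = 1)
    (T : AddSubmonoid ℕ)
    (hT : T = AddSubmonoid.closure {δ1, δ2, δ3, δ4})
    (hTne : T ≠ ⊤)
    (a d : ℕ) (ha : 2 ≤ a) (hd : 2 ≤ d)
    (hgcdad : Nat.gcd a d = 1) (hdT : d ∈ T)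
    (S : AddSubmonoid ℕ)
    (hS : S = AddSubmonoid.closure {a * δ1, a * δ2, a * δ3, a * δ4, d})
    (hFT : (frobNum T : ℝ) ≥
      (25 * ((δ1 : ℝ) * δ2 * δ3 * δ4)) ^ ((1 : ℝ) / 3)
        - ((δ1 : ℝ) + δ2 + δ3 + δ4)) :
    (frobNum S : ℝ) ≥
      (a : ℝ) * ((25 * ((δ1 : ℝ) * δ2 * δ3 * δ4)) ^ ((1 : ℝ) / 3) + (d : ℝ))
        - ((a : ℝ) * ((δ1 : ℝ) + δ2 + δ3 + δ4) + (d : ℝ)) := by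
  have bT : BddAbove {n : ℕ | n ∉ T} := by
    rw [hT]
    refine aux_bdd _ fun k hk => ?_
    rw [← hgcd]
    exact Nat.dvd_gcd (Nat.dvd_gcd (Nat.dvd_gcd (hk _ (by simp)) (hk _ (by simp)))
      (hk _ (by simp))) (hk _ (by simp))
  have bS : BddAbove {n : ℕ | n ∉ S} := by
    rw [hS]
    refine aux_bdd _ fun k hk => ?_
    have hkd : k ∣ d := hk _ (by simp)
    have hc : Nat.Coprime k a := (Nat.Coprime.coprime_dvd_right hkd hgcdad).symm
    rw [← hgcd]
    exact Nat.dvd_gcd (Nat.dvd_gcd (Nat.dvd_gcd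
      (hc.dvd_of_dvd_mul_left (hk _ (by simp))) (hc.dvd_of_dvd_mul_left (hk _ (by simp))))
      (hc.dvd_of_dvd_mul_left (hk _ (by simp)))) (hc.dvd_of_dvd_mul_left (hk _ (by simp)))
  have hne : {n : ℕ | n ∉ T}.Nonempty := by
    by_contra hcon
    apply hTne
    rw [Set.not_nonempty_iff_eq_empty] at hcon
    ext x
    simp only [AddSubmonoid.mem_top, iff_true]
    by_contra hx
    have : x ∈ {n : ℕ | n ∉ T} := hx
    rw [hcon] at this
    exact this
  have hf : frobNum T ∉ T := Nat.sSup_mem hne bT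
  have hrep : ∀ x ∈ S, ∃ t ∈ T, ∃ k : ℕ, x = a * t + k * d := by
    intro x hx
    rw [hS] at hx
    induction hx using AddSubmonoid.closure_induction with
    | mem x hx =>
      have hg : ∀ y ∈ ({δ1, δ2, δ3, δ4} : Set ℕ), y ∈ T := by
        intro y hy
        rw [hT]
        exact AddSubmonoid.subset_closure hy
      rcases hx with rfl | rfl | rfl | rfl | rfl
      · exact ⟨δ1, hg _ (by simp), 0, by simp⟩
      · exact ⟨δ2, hg _ (by simp), 0, by simp⟩
      · exact ⟨δ3, hg _ (by simp), 0, by simp⟩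
      · exact ⟨δ4, hg _ (by simp), 0, by simp⟩
      · exact ⟨0, T.zero_mem, 1, by simp⟩
    | zero => exact ⟨0, T.zero_mem, 0, by simp⟩
    | add x y _ _ ihx ihy =>
      obtain ⟨t, ht, k, rfl⟩ := ihx
      obtain ⟨u, hu, l, rfl⟩ := ihy
      exact ⟨t + u, T.add_mem ht hu, k + l, by ring⟩
  obtain ⟨b, rfl⟩ : ∃ b, a = b + 1 := ⟨a - 1, by omega⟩
  have hnot : (b + 1) * frobNum T + b * d ∉ S := by
    intro hx
    obtain ⟨t, ht, k, hk⟩ := hrep _ hx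
    have hdv : (b + 1) ∣ (k + 1) := by
      have hz : ((b + 1 : ℕ) : ℤ) ∣ ((k + 1) * d : ℕ) := by
        refine ⟨(frobNum T : ℤ) - t + d, ?_⟩
        have hk' : ((b : ℤ) + 1) * frobNum T + b * d = (b + 1) * t + k * d := by
          exact_mod_cast hk
        push_cast
        linarith
      exact Nat.Coprime.dvd_of_dvd_mul_right hgcdad (Int.natCast_dvd_natCast.mp hz)
    obtain ⟨m, hm⟩ := hdv
    obtain ⟨m, rfl⟩ : ∃ l, m = l + 1 := by
      refine ⟨m - 1, ?_⟩
      rcases m with _ | m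
      · simp at hm
      · simp
    have hkk : k = (b + 1) * m + b := by linarith
    subst hkk
    have hft : frobNum T = t + m * d := by
      apply Nat.eq_of_mul_eq_mul_left (Nat.succ_pos b)
      rw [Nat.succ_eq_add_one]
      linarith
    apply hf
    rw [hft]
    exact T.add_mem ht (by simpa using T.nsmul_mem hdT m)
  have hle : (b + 1) * frobNum T + b * d ≤ frobNum S := le_csSup bS hnot
  have hle' : ((b : ℝ) + 1) * frobNum T + b * d ≤ frobNum S := by exact_mod_cast hle
  have hmul := mul_le_mul_of_nonneg_left hFT (by positivity : (0 : ℝ) ≤ (b : ℝ) + 1)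
  push_cast
  linarith
end

section
/- For all positive real numbers a, δ1, δ2, δ3, δ4 and d5, writing π4 = δ1·δ2·δ3·δ4, the strict inequality a·((25·π4)^{1/3} + d5) > 4·(9/10)^{1/4}·(a⁴·π4·d5)^{1/4} holds. Equivalently, g_w > g_s, where g_w = a((25π4)^{1/3} + d5) and g_s = 4·λ(6)·π5^{1/4} with λ(6) = (9/10)^{1/4} and π5 = (aδ1)(aδ2)(aδ3)(aδ4)·d5. -/
/-- Proposition 4 (real form): g_w > g_s for the Watanabe construction, i.e.
a·((25·π4)^{1/3} + d5) > 4·(9/10)^{1/4}·(a⁴·π4·d5)^{1/4}. -/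
theorem stmt_13 (a δ1 δ2 δ3 δ4 d5 : ℝ)
    (ha : 0 < a) (h1 : 0 < δ1) (h2 : 0 < δ2) (h3 : 0 < δ3) (h4 : 0 < δ4)
    (hd5 : 0 < d5) :
    a * ((25 * (δ1 * δ2 * δ3 * δ4)) ^ ((1 : ℝ) / 3) + d5) >
      4 * ((9 : ℝ) / 10) ^ ((1 : ℝ) / 4)
        * (a ^ 4 * (δ1 * δ2 * δ3 * δ4) * d5) ^ ((1 : ℝ) / 4) := by
  have hP : 0 < δ1 * δ2 * δ3 * δ4 := by positivity
  generalize δ1 * δ2 * δ3 * δ4 = P at hP ⊢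
  have hx : 0 < (25 * P) ^ ((1 : ℝ) / 3) := by positivity
  have hx3 : ((25 * P) ^ ((1 : ℝ) / 3)) ^ 3 = 25 * P := by
    rw [← Real.rpow_natCast, ← Real.rpow_mul (by positivity)]
    norm_num
  generalize (25 * P) ^ ((1 : ℝ) / 3) = x at hx hx3 ⊢
  have hR4 : (4 * ((9 : ℝ) / 10) ^ ((1 : ℝ) / 4) * (a ^ 4 * P * d5) ^ ((1 : ℝ) / 4)) ^ 4
      = 256 * (9 / 10) * (a ^ 4 * P * d5) := by
    rw [mul_pow, mul_pow, ← Real.rpow_natCast (_ ^ ((1 : ℝ) / 4)),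
      ← Real.rpow_natCast ((a ^ 4 * P * d5) ^ ((1 : ℝ) / 4)),
      ← Real.rpow_mul (by positivity), ← Real.rpow_mul (by positivity)]
    norm_num
  refine lt_of_pow_lt_pow_left₀ 4 (by positivity) ?_
  rw [hR4, mul_pow]
  have hPx : P = x ^ 3 / 25 := by linarith
  have hamgm : 256 / 27 * (x ^ 3 * d5) ≤ (x + d5) ^ 4 := by
    have h0 : 0 ≤ (x / 3 - d5) ^ 2 * (9 * x ^ 2 + 14 / 3 * x * d5 + d5 ^ 2) := by positivity
    nlinarith [h0]
  have hpos : 0 < x ^ 3 * d5 := by positivity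
  have hk : 256 * (9 / 10) * (P * d5) < (x + d5) ^ 4 := by
    rw [hPx]; linarith
  have ha4 : 0 < a ^ 4 := by positivity
  calc 256 * (9 / 10) * (a ^ 4 * P * d5) = a ^ 4 * (256 * (9 / 10) * (P * d5)) := by ring
    _ < a ^ 4 * (x + d5) ^ 4 := mul_lt_mul_of_pos_left hk ha4
end

section
/- Let n ≥ 2 be an integer and w1, …, wn positive real numbers, and let W_k denote the k-th elementary symmetric polynomial in w1, …, wn (with W_0 = 1). Then for every integer r with 1 ≤ r < n, one has W_1·W_r − (r+1)·W_{r+1} ≥ (r/n)·W_1·W_r. -/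
theorem aux_insert {n : ℕ} (w : Fin n → ℝ) (s : Finset (Fin n)) (a : Fin n) (ha : a ∉ s) (k : ℕ) :
    ∑ t ∈ Finset.powersetCard (k + 1) (insert a s), ∏ i ∈ t, w i
      = ∑ t ∈ Finset.powersetCard (k + 1) s, ∏ i ∈ t, w i
        + w a * ∑ t ∈ Finset.powersetCard k s, ∏ i ∈ t, w i := by
  have hmem : ∀ t ∈ Finset.powersetCard k s, a ∉ t := fun t ht h =>
    ha ((Finset.mem_powersetCard.1 ht).1 h)
  rw [Finset.powersetCard_succ_insert ha, Finset.sum_union, Finset.sum_image, Finset.mul_sum]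
  · congr 1
    apply Finset.sum_congr rfl
    intro t ht
    rw [Finset.prod_insert (hmem t ht)]
  · intro t ht u hu h
    rw [← Finset.erase_insert (hmem t ht), ← Finset.erase_insert (hmem u hu)]
    exact congrArg (fun x => x.erase a) h
  · rw [Finset.disjoint_left]
    intro t ht h
    obtain ⟨u, _, rfl⟩ := Finset.mem_image.1 h
    exact ha ((Finset.mem_powersetCard.1 ht).1 (Finset.mem_insert_self a u))

theorem aux_filter {n : ℕ} (i : Fin n) (r : ℕ) :
    Finset.powersetCard r (Finset.univ.erase i) =
      (Finset.powersetCard r (Finset.univ : Finset (Fin n))).filter (fun t => i ∉ t) := by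
  ext t
  simp only [Finset.mem_powersetCard, Finset.mem_filter, Finset.subset_erase]
  tauto

theorem aux_sum1 {n : ℕ} (w : Fin n → ℝ) (r : ℕ) :
    ∑ i, ∑ t ∈ Finset.powersetCard r (Finset.univ.erase i), ∏ j ∈ t, w j
      = ((n : ℝ) - r) * ∑ t ∈ Finset.powersetCard r (Finset.univ : Finset (Fin n)), ∏ j ∈ t, w j := by
  simp only [aux_filter, Finset.sum_filter]
  rw [Finset.sum_comm, Finset.mul_sum]
  apply Finset.sum_congr rfl
  intro t ht
  have hc := (Finset.mem_powersetCard.1 ht).2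
  rw [← Finset.sum_filter, Finset.sum_const, nsmul_eq_mul]
  congr 1
  have h1 : Finset.univ.filter (fun i => i ∉ t) = tᶜ := by ext; simp
  have h2 := Finset.card_add_card_compl t
  rw [h1]
  rw [hc, Fintype.card_fin] at h2
  have h3 : (r : ℝ) + (tᶜ.card : ℝ) = n := by exact_mod_cast h2
  linarith

theorem aux_sum2 {n : ℕ} (w : Fin n → ℝ) (r : ℕ) :
    ∑ i, w i * ∑ t ∈ Finset.powersetCard r (Finset.univ.erase i), ∏ j ∈ t, w j
      = ((r : ℝ) + 1) *
        ∑ t ∈ Finset.powersetCard (r + 1) (Finset.univ : Finset (Fin n)), ∏ j ∈ t, w j := by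
  have h : ∀ i, w i * ∑ t ∈ Finset.powersetCard r (Finset.univ.erase i), ∏ j ∈ t, w j
      = ∑ t ∈ Finset.powersetCard (r + 1) (Finset.univ : Finset (Fin n)), ∏ j ∈ t, w j
        - ∑ t ∈ Finset.powersetCard (r + 1) (Finset.univ.erase i), ∏ j ∈ t, w j := by
    intro i
    have := aux_insert w (Finset.univ.erase i) i (by simp) r
    rw [Finset.insert_erase (Finset.mem_univ i)] at this
    linarith
  simp only [h]
  rw [Finset.sum_sub_distrib, aux_sum1]
  simp only [Finset.sum_const, Finset.card_univ, Fintype.card_fin, nsmul_eq_mul]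
  push_cast; ring

/-- Inequality (23): a consequence of the Newton–Maclaurin inequalities for
elementary symmetric polynomials of positive reals. -/
theorem stmt_15 (n : ℕ) (hn : 2 ≤ n) (w : Fin n → ℝ) (hw : ∀ i, 0 < w i)
    (W : ℕ → ℝ)
    (hW : ∀ k, W k = ∑ t ∈ Finset.powersetCard k (Finset.univ : Finset (Fin n)),
      ∏ i ∈ t, w i)
    (r : ℕ) (hr1 : 1 ≤ r) (hrn : r < n) :
    W 1 * W r - ((r : ℝ) + 1) * W (r + 1) ≥ ((r : ℝ) / (n : ℝ)) * (W 1 * W r) := by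
  have hW1 : W 1 = ∑ i, w i := by rw [hW]; simp [Finset.powersetCard_one]
  have hanti : Antivary w
      (fun i => ∑ t ∈ Finset.powersetCard r (Finset.univ.erase i), ∏ j ∈ t, w j) := by
    intro i j hij
    by_contra! hlt
    have hne : i ≠ j := by rintro rfl; exact lt_irrefl _ hlt
    obtain ⟨k, rfl⟩ : ∃ k, r = k + 1 := ⟨r - 1, by omega⟩
    have e1 : Finset.univ.erase i = insert j ((Finset.univ.erase i).erase j) :=
      (Finset.insert_erase (by simp [hne.symm])).symm
    have e2 : Finset.univ.erase j = insert i ((Finset.univ.erase i).erase j) := by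
      rw [Finset.erase_right_comm]
      exact (Finset.insert_erase (by simp [hne])).symm
    simp only at hij
    rw [e2, e1, Finset.erase_insert (by simp), aux_insert _ _ _ (by simp), 
      aux_insert _ _ _ (by simp)] at hij
    have hp : 0 ≤ ∑ t ∈ Finset.powersetCard k ((Finset.univ.erase i).erase j), ∏ j ∈ t, w j :=
      Finset.sum_nonneg fun t _ => Finset.prod_nonneg fun x _ => (hw x).le
    nlinarith
  have key := hanti.card_mul_sum_le_sum_mul_sum
  rw [aux_sum2, aux_sum1, ← hW, ← hW, ← hW1, Fintype.card_fin] at key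
  have hn0 : (0 : ℝ) < n := by exact_mod_cast (by omega : 0 < n)
  rw [ge_iff_le, div_mul_eq_mul_div, div_le_iff₀ hn0]
  linarith
end
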